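/- Let D be a finite set of positive integers with at least two elements, let e ∈ D with e ∈ {1, 2}, and set η_e = ∏_{d ∈ D \ {e}} Φ_d(ζ_e) ∈ ℤ[ζ_e] = ℤ (here ζ_1 = 1 and ζ_2 = −1). If η_e = ±3 and O(D \ {e}) is a GE_2-ring, then O(D) is a GE_2-ring. -/

import Mathlib

/-!
Write `R = O(D)`, `S = O(D \ {e})`. Evaluation at `ζ_e = ±1` and reduction give ring homomorphisms
`f : R → ℤ` and `g : R → S`, jointly injective, and `f` maps `ker g` onto the ideal
`(η_e) = 3ℤ`: this exhibits `R` as the fibre product of `ℤ` and `S` over `ℤ/3`.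

Given `A ∈ SL₂(R)`, the hypothesis on `S` and the surjectivity of `g` allow one to multiply `A` by an
element of `E₂(R)` so that `g(A) = 1`; then `f(A)` lies in the principal congruence subgroup `Γ(3)` of
`SL₂(ℤ)`. The point is that `Γ(3)` is generated by `SL₂(ℤ)`-conjugates of powers of the elementary
matrix with off-diagonal entry `3` (`gamma_three_mem`, a Euclidean-type descent on the first
column), and that each such conjugate lifts to an element of `E₂(R)` which is trivial in `S`, since
`3 = f(t)` for some `t ∈ ker g`. The general fibre-product statement is `isGE_of_fibre`.
-/

/-- The set of `n × n` elementary matrices over `R`: matrices differing from the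
identity by a single off-diagonal entry. -/
def ElemMatrices (n : ℕ) (R : Type*) [CommRing R] : Set (Matrix (Fin n) (Fin n) R) :=
  {M | ∃ (i j : Fin n) (c : R), i ≠ j ∧ M = Matrix.transvection i j c}

/-- `R` is a `GE_n`-ring: every matrix of determinant one is a product of
elementary matrices, i.e. `SL_n(R) = E_n(R)`. -/
def IsGE (R : Type*) [CommRing R] (n : ℕ) : Prop :=
  ∀ A : Matrix (Fin n) (Fin n) R, A.det = 1 → A ∈ Submonoid.closure (ElemMatrices n R)

/-- `R` is a generalized Euclidean ring: a `GE_n`-ring for every `n ≥ 2`. -/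
def IsGERing (R : Type*) [CommRing R] : Prop := ∀ n, 2 ≤ n → IsGE R n

/-- The primitive `e`-th root of unity `ζ_e = e^{2πi/e}`. -/
noncomputable def zeta (e : ℕ) : ℂ := Complex.exp (2 * Real.pi * Complex.I / e)

/-- The subring `ℤ[ζ_e]` of `ℂ`. -/
noncomputable def Zzeta (e : ℕ) : Subalgebra ℤ ℂ := Algebra.adjoin ℤ {zeta e}

/-- `ζ_e` as an element of `ℤ[ζ_e]`. -/
noncomputable def zetaEl (e : ℕ) : Zzeta e :=
  ⟨zeta e, Algebra.self_mem_adjoin_singleton ℤ _⟩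

/-- `η_e = ∏_{d ∈ D \ {e}} Φ_d(ζ_e)` as an element of `ℤ[ζ_e]`. -/
noncomputable def eta (D : Finset ℕ) (e : ℕ) : Zzeta e :=
  ∏ d ∈ D.erase e, Polynomial.aeval (zetaEl e) (Polynomial.cyclotomic d ℤ)

/-- The generators are the parabolic matrices in `Γ(3)` fixing the four cusps `∞`, `0`, `1`, `-1`.
Applying a suitable one of them shrinks the first column `(a, c)` as long as `c ≠ 0`: the first two
do so unless `|a|` and `|c|` are within a factor `3/2` of each other, in which case one of
the last two does. -/
lemma gamma_three_mem (M : Submonoid (Matrix (Fin 2) (Fin 2) ℤ))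
    (h1 : ∀ s : ℤ, !![1, 3 * s; 0, 1] ∈ M)
    (h2 : ∀ s : ℤ, !![1, 0; 3 * s, 1] ∈ M)
    (h3 : ∀ s : ℤ, !![1 - 3 * s, 3 * s; -(3 * s), 1 + 3 * s] ∈ M)
    (h4 : ∀ s : ℤ, !![1 + 3 * s, 3 * s; -(3 * s), 1 - 3 * s] ∈ M) (n : ℕ) :
    ∀ a b c d : ℤ, a.natAbs + c.natAbs = n → a * d - b * c = 1 →
      3 ∣ a - 1 → 3 ∣ b → 3 ∣ c → 3 ∣ d - 1 → !![a, b; c, d] ∈ M := by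
  induction n using Nat.strong_induction_on with
  | _ n ih =>
    intro a b c d hn hdet ha hb hc hd
    by_cases hc0 : c = 0
    · subst hc0
      have had : a * d = 1 := by linarith
      have ha1 : a = 1 := by
        rcases Int.isUnit_iff.mp (IsUnit.of_mul_eq_one d had) with h | h <;> omega
      subst ha1
      have hd1 : d = 1 := by linarith
      subst hd1
      obtain ⟨s, rfl⟩ := hb
      exact h1 s
    have step1 : ∀ s : ℤ, (a - 3 * s * c).natAbs + c.natAbs < n → !![a, b; c, d] ∈ M := by
      intro s hs
      have := ih _ hs (a - 3 * s * c) (b - 3 * s * d) c d rfl (by linear_combination hdet)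
        (by rw [mul_assoc]; omega) (by rw [mul_assoc]; omega) hc hd
      have := M.mul_mem (h1 s) this
      convert this using 1
      ext i j; fin_cases i <;> fin_cases j <;> simp [Matrix.mul_apply, Fin.sum_univ_two]
    have step2 : ∀ s : ℤ, a.natAbs + (c - 3 * s * a).natAbs < n → !![a, b; c, d] ∈ M := by
      intro s hs
      have := ih _ hs a b (c - 3 * s * a) (d - 3 * s * b) rfl (by linear_combination hdet)
        ha hb (by rw [mul_assoc]; omega) (by rw [mul_assoc]; omega)
      have := M.mul_mem (h2 s) this
      convert this using 1
      ext i j; fin_cases i <;> fin_cases j <;> simp [Matrix.mul_apply, Fin.sum_univ_two]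
    have step3 : ∀ s : ℤ, (a - 3 * (s * (c - a))).natAbs + (c - 3 * (s * (c - a))).natAbs < n →
        !![a, b; c, d] ∈ M := by
      intro s hs
      have := ih _ hs (a - 3 * (s * (c - a))) (b - 3 * (s * (d - b)))
        (c - 3 * (s * (c - a))) (d - 3 * (s * (d - b))) rfl (by linear_combination hdet)
        (by omega) (by omega) (by omega) (by omega)
      have := M.mul_mem (h3 s) this
      convert this using 1
      ext i j; fin_cases i <;> fin_cases j <;> simp [Matrix.mul_apply, Fin.sum_univ_two] <;> ring
    have step4 : ∀ s : ℤ, (a - 3 * (s * (c + a))).natAbs + (c + 3 * (s * (c + a))).natAbs < n →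
        !![a, b; c, d] ∈ M := by
      intro s hs
      have := ih _ hs (a - 3 * (s * (c + a))) (b - 3 * (s * (d + b)))
        (c + 3 * (s * (c + a))) (d + 3 * (s * (d + b))) rfl (by linear_combination hdet)
        (by omega) (by omega) (by omega) (by omega)
      have := M.mul_mem (h4 s) this
      convert this using 1
      ext i j; fin_cases i <;> fin_cases j <;> simp [Matrix.mul_apply, Fin.sum_univ_two] <;> ring
    by_cases hA : 3 * c.natAbs < 2 * a.natAbs
    · have : (a - 3 * 1 * c).natAbs + c.natAbs < n ∨ (a - 3 * (-1) * c).natAbs + c.natAbs < n := by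
        omega
      exact this.elim (step1 1) (step1 (-1))
    by_cases hB : 3 * a.natAbs < 2 * c.natAbs
    · have : a.natAbs + (c - 3 * 1 * a).natAbs < n ∨ a.natAbs + (c - 3 * (-1) * a).natAbs < n := by
        omega
      exact this.elim (step2 1) (step2 (-1))
    by_cases hs : (0 < a ∧ 0 < c) ∨ (a < 0 ∧ c < 0)
    · have : (a - 3 * (1 * (c - a))).natAbs + (c - 3 * (1 * (c - a))).natAbs < n ∨
          (a - 3 * (-1 * (c - a))).natAbs + (c - 3 * (-1 * (c - a))).natAbs < n := by
        omega
      exact this.elim (step3 1) (step3 (-1))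
    · have : (a - 3 * (1 * (c + a))).natAbs + (c + 3 * (1 * (c + a))).natAbs < n ∨
          (a - 3 * (-1 * (c + a))).natAbs + (c + 3 * (-1 * (c + a))).natAbs < n := by
        omega
      exact this.elim (step4 1) (step4 (-1))

lemma elem_det {R : Type*} [CommRing R] {U : Matrix (Fin 2) (Fin 2) R}
    (hU : U ∈ Submonoid.closure (ElemMatrices 2 R)) : U.det = 1 := by
  induction hU using Submonoid.closure_induction with
  | mem x hx =>
    obtain ⟨i, j, c, hij, rfl⟩ := hx
    exact Matrix.det_transvection_of_ne i j hij c
  | one => simp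
  | mul x y _ _ hx hy => rw [Matrix.det_mul, hx, hy, one_mul]

lemma elem_inv {R : Type*} [CommRing R] {U : Matrix (Fin 2) (Fin 2) R}
    (hU : U ∈ Submonoid.closure (ElemMatrices 2 R)) :
    ∃ V ∈ Submonoid.closure (ElemMatrices 2 R), U * V = 1 := by
  induction hU using Submonoid.closure_induction with
  | mem x hx =>
    obtain ⟨i, j, c, hij, rfl⟩ := hx
    refine ⟨Matrix.transvection i j (-c), Submonoid.subset_closure ⟨i, j, -c, hij, rfl⟩, ?_⟩
    rw [Matrix.transvection_mul_transvection_same _ _ hij]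
    simp
  | one => exact ⟨1, one_mem _, by simp⟩
  | mul x y _ _ hx hy =>
    obtain ⟨x', hx', hx⟩ := hx
    obtain ⟨y', hy', hy⟩ := hy
    refine ⟨y' * x', mul_mem hy' hx', ?_⟩
    rw [mul_assoc, ← mul_assoc y, hy, one_mul, hx]

lemma elem_lift {R S : Type*} [CommRing R] [CommRing S] (g : R →+* S)
    (hg : Function.Surjective g) {U : Matrix (Fin 2) (Fin 2) S}
    (hU : U ∈ Submonoid.closure (ElemMatrices 2 S)) :
    ∃ V ∈ Submonoid.closure (ElemMatrices 2 R), g.mapMatrix V = U := by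
  induction hU using Submonoid.closure_induction with
  | mem x hx =>
    obtain ⟨i, j, c, hij, rfl⟩ := hx
    obtain ⟨c, rfl⟩ := hg c
    refine ⟨Matrix.transvection i j c, Submonoid.subset_closure ⟨i, j, c, hij, rfl⟩, ?_⟩
    simp [Matrix.transvection, Matrix.map_add]
  | one => exact ⟨1, one_mem _, by simp⟩
  | mul x y _ _ hx hy =>
    obtain ⟨x', hx', rfl⟩ := hx
    obtain ⟨y', hy', rfl⟩ := hy
    exact ⟨x' * y', mul_mem hx' hy', map_mul _ _ _⟩

lemma elem_upper {R : Type*} [CommRing R] (c : R) :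
    !![1, c; 0, 1] ∈ Submonoid.closure (ElemMatrices 2 R) := by
  refine Submonoid.subset_closure ⟨0, 1, c, by decide, ?_⟩
  ext i j; fin_cases i <;> fin_cases j <;> simp [Matrix.transvection, Matrix.single]

lemma elem_lower {R : Type*} [CommRing R] (c : R) :
    !![1, 0; c, 1] ∈ Submonoid.closure (ElemMatrices 2 R) := by
  refine Submonoid.subset_closure ⟨1, 0, c, by decide, ?_⟩
  ext i j; fin_cases i <;> fin_cases j <;> simp [Matrix.transvection, Matrix.single]

/-- The property `GE₂` passes from `S` to a ring `R` which is a fibre product of `ℤ` and `S` over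
`ℤ/3`: the hypotheses say that `R` embeds in `ℤ × S`, surjects onto `S`, and that the image
in `ℤ` of the kernel of `R → S` is `3ℤ`. -/
lemma isGE_of_fibre {R S : Type*} [CommRing R] [CommRing S] (f : R →+* ℤ) (g : R →+* S)
    (hg : Function.Surjective g) (hinj : ∀ r, f r = 0 → g r = 0 → r = 0)
    (t : R) (hft : f t = 3) (hgt : g t = 0) (hker : ∀ r, g r = 0 → 3 ∣ f r)
    (hS : IsGE S 2) : IsGE R 2 := by
  intro A hA
  let E := Submonoid.closure (ElemMatrices 2 R)
  -- The integral matrices `B` such that `(B, 1)` lies in the image of `E₂(R)`.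
  let M : Submonoid (Matrix (Fin 2) (Fin 2) ℤ) :=
    { carrier := {B | ∃ V ∈ E, f.mapMatrix V = B ∧ g.mapMatrix V = 1}
      one_mem' := ⟨1, one_mem _, by simp, by simp⟩
      mul_mem' := by
        rintro _ _ ⟨V, hV, rfl, hV1⟩ ⟨W, hW, rfl, hW1⟩
        exact ⟨V * W, mul_mem hV hW, map_mul _ _ _, by rw [map_mul, hV1, hW1, one_mul]⟩ }
  have h1 : ∀ s : ℤ, !![1, 3 * s; 0, 1] ∈ M := by
    intro s
    refine ⟨!![1, t * s; 0, 1], elem_upper _, ?_, ?_⟩ <;>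
    · ext i j; fin_cases i <;> fin_cases j <;> simp [hft, hgt]
  have h2 : ∀ s : ℤ, !![1, 0; 3 * s, 1] ∈ M := by
    intro s
    refine ⟨!![1, 0; t * s, 1], elem_lower _, ?_, ?_⟩ <;>
    · ext i j; fin_cases i <;> fin_cases j <;> simp [hft, hgt]
  have h3 : ∀ s : ℤ, !![1 - 3 * s, 3 * s; -(3 * s), 1 + 3 * s] ∈ M := by
    intro s
    refine ⟨!![1, 0; 1, 1] * !![1, t * s; 0, 1] * !![1, 0; -1, 1],
      mul_mem (mul_mem (elem_lower _) (elem_upper _)) (elem_lower _), ?_, ?_⟩ <;>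
    · ext i j; fin_cases i <;> fin_cases j <;> simp [hft, hgt] <;> ring
  have h4 : ∀ s : ℤ, !![1 + 3 * s, 3 * s; -(3 * s), 1 - 3 * s] ∈ M := by
    intro s
    refine ⟨!![1, 0; -1, 1] * !![1, t * s; 0, 1] * !![1, 0; 1, 1],
      mul_mem (mul_mem (elem_lower _) (elem_upper _)) (elem_lower _), ?_, ?_⟩ <;>
    · ext i j; fin_cases i <;> fin_cases j <;> simp [hft, hgt] <;> ring
  obtain ⟨U, hU, hUA⟩ := elem_lift g hg (hS (g.mapMatrix A.adjugate)
    (by rw [← RingHom.map_det, Matrix.det_adjugate, hA]; simp))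
  have hB1 : g.mapMatrix (A * U) = 1 := by
    rw [map_mul, hUA, ← map_mul, Matrix.mul_adjugate, hA]; simp
  have hBdet : (A * U).det = 1 := by rw [Matrix.det_mul, hA, elem_det hU, one_mul]
  have hBM : f.mapMatrix (A * U) ∈ M := by
    generalize A * U = B at hB1 hBdet
    have e : ∀ i j, g (B i j) = (1 : Matrix (Fin 2) (Fin 2) S) i j := fun i j => by
      rw [← hB1]; rfl
    have := gamma_three_mem M h1 h2 h3 h4 _ (f (B 0 0)) (f (B 0 1)) (f (B 1 0)) (f (B 1 1)) rfl
      (by rw [← map_mul, ← map_mul, ← map_sub, ← Matrix.det_fin_two, hBdet, map_one])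
      (by rw [← map_one f, ← map_sub]; apply hker; simp [e])
      (by apply hker; simp [e]) (by apply hker; simp [e])
      (by rw [← map_one f, ← map_sub]; apply hker; simp [e])
    convert this using 1
    ext i j; fin_cases i <;> fin_cases j <;> simp
  obtain ⟨V, hV, hfV, hgV⟩ := hBM
  have hVB : A * U = V := by
    ext i j
    rw [← sub_eq_zero]
    apply hinj
    · rw [map_sub, sub_eq_zero]
      exact (congrFun (congrFun hfV i) j).symm
    · rw [map_sub, sub_eq_zero]
      exact congrFun (congrFun (hB1.trans hgV.symm) i) j
  obtain ⟨W, hW, hUW⟩ := elem_inv hU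
  have : A = V * W := by rw [← hVB, mul_assoc, hUW, mul_one]
  rw [this]
  exact mul_mem hV hW

open Polynomial in
lemma prod_cyclotomic_dvd (D : Finset ℕ) (hpos : ∀ d ∈ D, 0 < d) (p : ℤ[X])
    (hp : ∀ d ∈ D, cyclotomic d ℤ ∣ p) : ∏ d ∈ D, cyclotomic d ℤ ∣ p := by
  refine Finset.prod_dvd_of_isRelPrime ?_ hp
  intro a ha b hb hab
  rw [Function.onFun, (cyclotomic.irreducible (hpos a ha)).isRelPrime_iff_not_dvd]
  intro h
  have := (cyclotomic.irreducible (hpos a ha)).associated_of_dvd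
    (cyclotomic.irreducible (hpos b hb)) h
  exact hab (cyclotomic_injective (R := ℤ)
    (eq_of_monic_of_associated (cyclotomic.monic a ℤ) (cyclotomic.monic b ℤ) this))

open Polynomial in
/-- The number `ε = ±1` is `ζ_e`, viewed as an integer. -/
lemma exists_sign (e : ℕ) (heS : e ∈ ({1, 2} : Finset ℕ)) :
    ∃ ε : ℤ, cyclotomic e ℤ = X - C ε ∧ zetaEl e = algebraMap ℤ (Zzeta e) ε := by
  simp only [Finset.mem_insert, Finset.mem_singleton] at heS
  rcases heS with rfl | rfl
  · refine ⟨1, by simp [cyclotomic_one], Subtype.ext ?_⟩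
    simp [zetaEl, zeta, Complex.exp_two_pi_mul_I]
  · refine ⟨-1, by simp [cyclotomic_two], Subtype.ext ?_⟩
    have : (2 * Real.pi * Complex.I / (2 : ℕ) : ℂ) = Real.pi * Complex.I := by
      push_cast; ring
    simp only [zetaEl, zeta, this, Complex.exp_pi_mul_I]
    simp

/-- If `e ∈ D ∩ {1,2}`, `η_e = ±3`, and `O(D \ {e})` is a `GE_2`-ring, then
`O(D)` is a `GE_2`-ring. -/
theorem stmt_10 (D : Finset ℕ) (hpos : ∀ d ∈ D, 0 < d) (hcard : 2 ≤ D.card)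
    (e : ℕ) (he : e ∈ D) (heS : e ∈ ({1, 2} : Finset ℕ))
    (heta : eta D e = 3 ∨ eta D e = -3)
    (hGE : IsGE (Polynomial ℤ ⧸
      (⨅ d ∈ D.erase e, Ideal.span {Polynomial.cyclotomic d ℤ})) 2) :
    IsGE (Polynomial ℤ ⧸ (⨅ d ∈ D, Ideal.span {Polynomial.cyclotomic d ℤ})) 2 := by
  obtain ⟨ε, hcyc, hz⟩ := exists_sign e heS
  set P : Polynomial ℤ := ∏ d ∈ D.erase e, Polynomial.cyclotomic d ℤ with hP
  have hmem : ∀ (F : Finset ℕ) (p : Polynomial ℤ),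
      p ∈ (⨅ d ∈ F, Ideal.span {Polynomial.cyclotomic d ℤ}) ↔
        ∀ d ∈ F, Polynomial.cyclotomic d ℤ ∣ p := by
    intro F p
    simp [Submodule.mem_iInf, Ideal.mem_span_singleton]
  have hPe : P.eval ε = 3 ∨ P.eval ε = -3 := by
    have hev : eta D e = algebraMap ℤ (Zzeta e) (P.eval ε) := by
      rw [eta, ← map_prod, ← hP, hz, Polynomial.aeval_algebraMap_apply]
      simp
    have hi : Function.Injective (algebraMap ℤ (Zzeta e)) :=
      FaithfulSMul.algebraMap_injective _ _
    rw [hev] at heta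
    rcases heta with h | h
    · exact Or.inl (hi (by rw [h]; simp))
    · exact Or.inr (hi (by rw [h]; simp))
  have hle : (⨅ d ∈ D, Ideal.span {Polynomial.cyclotomic d ℤ}) ≤
      ⨅ d ∈ D.erase e, Ideal.span {Polynomial.cyclotomic d ℤ} := by
    intro p hp
    rw [hmem] at hp ⊢
    exact fun d hd => hp d (Finset.mem_of_mem_erase hd)
  have hPmem : P ∈ ⨅ d ∈ D.erase e, Ideal.span {Polynomial.cyclotomic d ℤ} := by
    rw [hmem]
    exact fun d hd => Finset.dvd_prod_of_mem _ hd
  let f : (Polynomial ℤ ⧸ (⨅ d ∈ D, Ideal.span {Polynomial.cyclotomic d ℤ})) →+* ℤ :=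
    Ideal.Quotient.lift _ (Polynomial.evalRingHom ε) (by
      intro p hp
      rw [hmem] at hp
      have := hp e he
      rw [hcyc, Polynomial.dvd_iff_isRoot] at this
      exact this)
  have hf_mk : ∀ p, f (Ideal.Quotient.mk _ p) = p.eval ε := fun _ => rfl
  let g := Ideal.Quotient.factor hle
  obtain ⟨t, hft, hgt⟩ : ∃ t, f t = 3 ∧ g t = 0 := by
    have h0 : g (Ideal.Quotient.mk _ P) = 0 := by
      simpa [g, Ideal.Quotient.eq_zero_iff_mem] using hPmem
    have h1 : f (Ideal.Quotient.mk _ P) = P.eval ε := hf_mk P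
    rcases hPe with h | h
    · exact ⟨Ideal.Quotient.mk _ P, by rw [h1, h], h0⟩
    · exact ⟨-Ideal.Quotient.mk _ P, by rw [map_neg, h1, h]; norm_num, by rw [map_neg, h0, neg_zero]⟩
  refine isGE_of_fibre f g (Ideal.Quotient.factor_surjective hle) ?_ t hft hgt ?_ hGE
  · intro r hf hg
    obtain ⟨p, rfl⟩ := Ideal.Quotient.mk_surjective r
    simp only [g, Ideal.Quotient.factor_mk, Ideal.Quotient.eq_zero_iff_mem] at hg ⊢
    rw [hmem] at hg ⊢
    intro d hd
    by_cases hde : d = e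
    · subst hde
      rw [hcyc, Polynomial.dvd_iff_isRoot]
      exact (hf_mk p).symm.trans hf
    · exact hg d (Finset.mem_erase.mpr ⟨hde, hd⟩)
  · intro r hg
    obtain ⟨p, rfl⟩ := Ideal.Quotient.mk_surjective r
    simp only [g, Ideal.Quotient.factor_mk, Ideal.Quotient.eq_zero_iff_mem] at hg
    rw [hmem] at hg
    obtain ⟨q, rfl⟩ :=
      prod_cyclotomic_dvd _ (fun d hd => hpos d (Finset.mem_of_mem_erase hd)) p hg
    have h1 : f (Ideal.Quotient.mk _ (P * q)) = P.eval ε * q.eval ε := by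
      rw [hf_mk, Polynomial.eval_mul]
    rw [h1]
    rcases hPe with h | h <;> rw [h]
    · exact dvd_mul_right _ _
    · exact ⟨-q.eval ε, by ring⟩
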